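/- arXiv:2502.05068 — 3 statements merged into one kernel-verified Lean document; each statement's English description precedes it below -/
import Mathlib

section
/- Walk-sum representation of the resolvent: Let V be a finite nonempty index set and A a Metzler real matrix indexed by V with A_{σ,σ} ≤ 0 for all σ, admitting a Perron root λ* (λ* is an eigenvalue of A and every complex eigenvalue of A has real part at most λ*). Let α be a real number with α > λ* and α > 0. Then α·1 − A is invertible, and for all σ, σ' ∈ V the extended-real sum over all finite sequences σ = σ₁, σ₂, …, σ_ℓ = σ' (ℓ ≥ 1, consecutive entries distinct) of ∏_{k=1}^{ℓ−1} A_{σ_{k+1},σ_k}/(α − A_{σ_k,σ_k}), multiplied by 1/(α − A_{σ',σ'}), equals ENNReal.ofReal( ((α·1 − A)⁻¹)_{σ',σ} ). -/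
open scoped ENNReal

/-- The weight of a finite path, as the product (in `[0,∞]`) of the
`ENNReal.ofReal`-weights of its consecutive pairs. The empty product is `1`. -/
noncomputable def pathWeight {V : Type*} (w : V → V → ℝ) : List V → ℝ≥0∞
  | [] => 1
  | [_] => 1
  | a :: b :: l => ENNReal.ofReal (w a b) * pathWeight w (b :: l)

/-- `l` is a walk from `σ` to `σ'`: a nonempty finite sequence starting at `σ`,
ending at `σ'`, with consecutive entries distinct. -/
def IsWalk {V : Type*} (σ σ' : V) (l : List V) : Prop :=
  l ≠ [] ∧ l.head? = some σ ∧ l.getLast? = some σ' ∧ l.Chain' (· ≠ ·)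

/-- A complex number `μ` is an eigenvalue of the real matrix `M`
(via its complexification). -/
def Matrix.IsComplexEigenvalue {V : Type*} [Fintype V] (M : Matrix V V ℝ) (μ : ℂ) : Prop :=
  ∃ v : V → ℂ, v ≠ 0 ∧ (M.map (Complex.ofReal)).mulVec v = μ • v

/-- `lam` is the Perron root (Lyapunov exponent) of `A`. -/
def Matrix.IsPerronRoot {V : Type*} [Fintype V] (A : Matrix V V ℝ) (lam : ℝ) : Prop :=
  (∃ v : V → ℝ, v ≠ 0 ∧ A.mulVec v = lam • v) ∧
  ∀ μ : ℂ, A.IsComplexEigenvalue μ → μ.re ≤ lam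

/-- `A` is a Metzler matrix: all off-diagonal entries are nonnegative. -/
def Matrix.IsMetzler {V : Type*} (A : Matrix V V ℝ) : Prop :=
  ∀ σ σ' : V, σ ≠ σ' → 0 ≤ A σ' σ

/-- If `A` is Metzler and `(β • 1 - A) v` is strictly positive, then a nonnegative `v` is
strictly positive. -/
theorem Matrix.IsMetzler.pos_of_nonneg {V : Type*} [Fintype V] [DecidableEq V]
    {A : Matrix V V ℝ} (hA : A.IsMetzler) {β : ℝ} {v b : V → ℝ} (hb : ∀ i, 0 < b i)
    (h : (β • (1 : Matrix V V ℝ) - A).mulVec v = b) (hv : ∀ i, 0 ≤ v i) (i : V) : 0 < v i := by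
  refine (hv i).lt_of_ne fun h0 => ?_
  have hi := congrFun h i
  simp only [Matrix.sub_mulVec, Matrix.smul_mulVec, Matrix.one_mulVec, Pi.sub_apply,
    Pi.smul_apply, smul_eq_mul, ← h0, mul_zero, zero_sub] at hi
  have : 0 ≤ A.mulVec v i := Finset.sum_nonneg fun j _ => by
    by_cases hj : j = i
    · simp [hj, ← h0]
    · exact mul_nonneg (hA j i hj) (hv j)
  linarith [hb i]

/-- For `β` above all row sums of the Metzler matrix `A`, solutions of `(β • 1 - A) v = b` with
positive right-hand side are positive. -/
theorem Matrix.IsMetzler.pos_of_row_sum_lt {V : Type*} [Fintype V] [DecidableEq V]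
    {A : Matrix V V ℝ} (hA : A.IsMetzler) {β : ℝ} (hβ : ∀ i, ∑ j, A i j < β) {v b : V → ℝ}
    (hb : ∀ i, 0 < b i) (h : (β • (1 : Matrix V V ℝ) - A).mulVec v = b) (i : V) : 0 < v i := by
  obtain ⟨m, -, hm⟩ := Finset.exists_min_image Finset.univ v ⟨i, Finset.mem_univ i⟩
  refine lt_of_lt_of_le ?_ (hm i (Finset.mem_univ i))
  have hi := congrFun h m
  simp only [Matrix.sub_mulVec, Matrix.smul_mulVec, Matrix.one_mulVec, Pi.sub_apply,
    Pi.smul_apply, smul_eq_mul] at hi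
  have hle : (∑ j, A m j) * v m ≤ A.mulVec v m := by
    rw [Finset.sum_mul]
    refine Finset.sum_le_sum fun j _ => ?_
    by_cases hj : j = m
    · simp [hj]
    · exact mul_le_mul_of_nonneg_left (hm j (Finset.mem_univ j)) (hA j m hj)
  have hpos : 0 < (β - ∑ j, A m j) * v m := by linarith [hb m]
  exact pos_of_mul_pos_right hpos (sub_nonneg.2 (hβ m).le)

/-- If a Metzler matrix `A` has no real eigenvalue in `[α, ∞)`, then the inverse of `α • 1 - A` maps
positive vectors to positive vectors. -/
theorem Matrix.IsMetzler.exists_pos_mulVec_eq {V : Type*} [Fintype V] [DecidableEq V]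
    {A : Matrix V V ℝ} (hA : A.IsMetzler) {α : ℝ}
    (hdet : ∀ β, α ≤ β → (β • (1 : Matrix V V ℝ) - A).det ≠ 0) {b : V → ℝ} (hb : ∀ i, 0 < b i) :
    ∃ v : V → ℝ, (∀ i, 0 < v i) ∧ (α • (1 : Matrix V V ℝ) - A).mulVec v = b := by
  set v : ℝ → V → ℝ := fun β => (β • (1 : Matrix V V ℝ) - A).det⁻¹ •
    (β • (1 : Matrix V V ℝ) - A).adjugate.mulVec b with hv
  have hsol : ∀ β, α ≤ β → (β • (1 : Matrix V V ℝ) - A).mulVec (v β) = b := fun β hβ => by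
    simp only [hv, Matrix.mulVec_smul, Matrix.mulVec_mulVec, Matrix.mul_adjugate,
      Matrix.smul_mulVec, Matrix.one_mulVec, smul_smul]
    rw [inv_mul_cancel₀ (hdet β hβ), one_smul]
  have hM : Continuous fun β : ℝ => β • (1 : Matrix V V ℝ) - A := by fun_prop
  have hcont : ContinuousOn v (Set.Ici α) :=
    (hM.matrix_det.continuousOn.inv₀ fun β hβ => hdet β hβ).smul
      (hM.matrix_adjugate.matrix_mulVec continuous_const).continuousOn
  have hopen : IsOpen {x : V → ℝ | ∀ i, 0 < x i} := by
    simp only [Set.ofPred_forall]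
    exact isOpen_iInter_of_finite fun i => isOpen_lt continuous_const (continuous_apply i)
  have hopen' : IsOpen {x : V → ℝ | ∃ i, x i < 0} := by
    simp only [Set.ofPred_exists]
    exact isOpen_iUnion fun i => isOpen_lt (continuous_apply i) continuous_const
  have hconn : IsPreconnected (v '' Set.Ici α) := isPreconnected_Ici.image v hcont
  have hcover : v '' Set.Ici α ⊆ {x | ∀ i, 0 < x i} ∪ {x | ∃ i, x i < 0} := by
    rintro _ ⟨β, hβ, rfl⟩
    by_cases hneg : ∃ i, v β i < 0
    · exact Or.inr hneg
    · push Not at hneg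
      exact Or.inl (hA.pos_of_nonneg hb (hsol β hβ) hneg)
  obtain ⟨β, hαβ, hβ⟩ : ∃ β, α ≤ β ∧ ∀ i, ∑ j, A i j < β := by
    obtain ⟨M, hM⟩ := (Set.finite_range fun i => ∑ j, A i j).bddAbove
    refine ⟨max α (M + 1), le_max_left _ _, fun i => lt_max_of_lt_right ?_⟩
    have := hM ⟨i, rfl⟩
    simp only at this
    linarith
  refine ⟨v α, ?_, hsol α le_rfl⟩
  have hsub : v '' Set.Ici α ⊆ {x | ∀ i, 0 < x i} := by
    refine hconn.subset_left_of_subset_union hopen hopen' ?_ hcover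
      ⟨v β, ⟨β, hαβ, rfl⟩, hA.pos_of_row_sum_lt hβ hb (hsol β hαβ)⟩
    rw [Set.disjoint_left]
    rintro x hx ⟨i, hi⟩
    exact hi.not_gt (hx i)
  exact hsub ⟨α, Set.mem_Ici.2 le_rfl, rfl⟩

/-- Above the Perron root there are no real eigenvalues. -/
theorem Matrix.IsPerronRoot.det_ne_zero {V : Type*} [Fintype V] [DecidableEq V]
    {A : Matrix V V ℝ} {lam : ℝ} (h : A.IsPerronRoot lam) {β : ℝ} (hβ : lam < β) :
    (β • (1 : Matrix V V ℝ) - A).det ≠ 0 := by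
  intro hdet
  obtain ⟨v, hv0, hv⟩ := Matrix.exists_mulVec_eq_zero_iff.2 hdet
  rw [Matrix.sub_mulVec, Matrix.smul_mulVec, Matrix.one_mulVec, sub_eq_zero] at hv
  refine hβ.not_ge (h.2 β ⟨fun i => (v i : ℂ), fun h0 => hv0 ?_, ?_⟩)
  · funext i
    exact Complex.ofReal_eq_zero.1 (congrFun h0 i)
  · funext i
    have hi := congrFun hv i
    simp only [Matrix.mulVec, dotProduct, Pi.smul_apply, smul_eq_mul, Matrix.map_apply] at hi ⊢
    exact_mod_cast hi.symm

/-- The weight of the walk with first vertex `σ` and remaining vertices `l`, set to `0` when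
`σ :: l` is not a walk ending at `σ'`. -/
noncomputable def walkWeight {V : Type*} [DecidableEq V] (w : V → V → ℝ) (σ' : V) :
    V → List V → ℝ≥0∞
  | σ, [] => if σ = σ' then 1 else 0
  | σ, y :: l => (if σ = y then 0 else ENNReal.ofReal (w σ y)) * walkWeight w σ' y l

theorem isWalk_cons_cons {V : Type*} {σ σ' y : V} {l : List V} :
    IsWalk σ σ' (σ :: y :: l) ↔ σ ≠ y ∧ IsWalk y σ' (y :: l) := by
  simp [IsWalk, List.Chain', List.isChain_cons_cons]
  tauto

open Classical in
theorem walkWeight_eq_ite {V : Type*} (w : V → V → ℝ) (σ' : V) (l : List V) (σ : V) :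
    walkWeight w σ' σ l = if IsWalk σ σ' (σ :: l) then pathWeight w (σ :: l) else 0 := by
  induction l generalizing σ with
  | nil => simp [walkWeight, pathWeight, IsWalk, List.Chain']
  | cons y l ih =>
    rw [walkWeight, ih, isWalk_cons_cons, pathWeight]
    by_cases h : σ = y <;> simp [h]

theorem tsum_isWalk {V : Type*} [DecidableEq V] (w : V → V → ℝ) (σ σ' : V) :
    ∑' l : {l : List V // IsWalk σ σ' l}, pathWeight w l.1 = ∑' l, walkWeight w σ' σ l := by
  classical
  have hinj : Function.Injective fun l : List V => σ :: l := List.cons_injective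
  rw [show (∑' l : {l : List V // IsWalk σ σ' l}, pathWeight w l.1) =
    ∑' l, Set.indicator {l | IsWalk σ σ' l} (pathWeight w) l from
      tsum_subtype {l | IsWalk σ σ' l} (pathWeight w), ← hinj.tsum_eq]
  · refine tsum_congr fun l => ?_
    simp only [Set.indicator_apply, Set.mem_ofPred_eq]
    convert (walkWeight_eq_ite w σ' l σ).symm
  · intro l hl
    have hw : l ∈ {l | IsWalk σ σ' l} := Set.mem_of_indicator_ne_zero hl
    obtain ⟨hne, hhead, -⟩ := hw
    cases l with
    | nil => exact absurd rfl hne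
    | cons a l =>
      simp only [List.head?_cons, Option.some.injEq] at hhead
      exact ⟨l, by rw [hhead]⟩

theorem ENNReal.tsum_list {V : Type*} [Fintype V] (f : List V → ℝ≥0∞) :
    ∑' l, f l = f [] + ∑ y, ∑' l, f (y :: l) := by
  have hcons : Function.Injective fun p : V × List V => p.1 :: p.2 := by
    rintro ⟨a, l⟩ ⟨b, m⟩ h
    simpa using h
  rw [ENNReal.tsum_eq_add_tsum_ite (f := f) [], ← hcons.tsum_eq,
    ← tsum_fintype (L := .unconditional V), ← ENNReal.tsum_prod (f := fun y l => f (y :: l))]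
  · simp
  · intro l hl
    cases l with
    | nil => simp at hl
    | cons a l => exact ⟨(a, l), rfl⟩

/-- A supersolution `u` of the first-step equation bounds the walk sums. -/
theorem tsum_walkWeight_le {V : Type*} [Fintype V] [DecidableEq V] (w : V → V → ℝ) (σ' : V)
    {u : V → ℝ≥0∞}
    (hu : ∀ σ, 1 + ∑ y, (if σ = y then 0 else ENNReal.ofReal (w σ y)) * u y ≤ u σ) (σ : V) :
    ∑' l, walkWeight w σ' σ l ≤ u σ := by
  have hbound : ∀ n σ, ∑' l : List V, (if l.length < n then walkWeight w σ' σ l else 0) ≤ u σ := by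
    intro n
    induction n with
    | zero => simp
    | succ n ih =>
      intro σ
      refine le_trans ?_ (hu σ)
      rw [ENNReal.tsum_list]
      refine add_le_add ?_ (Finset.sum_le_sum fun y _ => ?_)
      · simp only [walkWeight]
        split_ifs <;> simp
      · refine le_trans (le_of_eq ?_) (mul_le_mul_right (ih y) _)
        rw [← ENNReal.tsum_mul_left]
        exact tsum_congr fun l => by simp [walkWeight]
  refine ENNReal.summable.tsum_le_of_sum_le fun s => ?_
  refine le_trans (le_trans (le_of_eq (Finset.sum_congr rfl fun l hl => ?_))
    (ENNReal.sum_le_tsum s)) (hbound (s.sup List.length + 1) σ)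
  rw [if_pos (Nat.lt_succ_of_le (Finset.le_sup hl))]

theorem tsum_walkWeight_eq {V : Type*} [Fintype V] [DecidableEq V] (w : V → V → ℝ) (σ' σ : V) :
    ∑' l, walkWeight w σ' σ l = (if σ = σ' then 1 else 0) +
      ∑ y, (if σ = y then 0 else ENNReal.ofReal (w σ y)) * ∑' l, walkWeight w σ' y l := by
  rw [ENNReal.tsum_list]
  simp only [walkWeight, ENNReal.tsum_mul_left]

theorem Matrix.vecMul_smul_one_sub {V : Type*} [Fintype V] [DecidableEq V]
    (A : Matrix V V ℝ) (α : ℝ) (g : V → ℝ) (σ : V) :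
    Matrix.vecMul g (α • (1 : Matrix V V ℝ) - A) σ =
      g σ * (α - A σ σ) - ∑ y, (if σ = y then 0 else A y σ) * g y := by
  have hsum : ∑ y, g y * A y σ = g σ * A σ σ + ∑ y, (if σ = y then 0 else A y σ) * g y := by
    rw [← Finset.add_sum_erase _ _ (Finset.mem_univ σ),
      ← Finset.add_sum_erase Finset.univ (fun y => (if σ = y then 0 else A y σ) * g y)
        (Finset.mem_univ σ)]
    simp only [if_true, zero_mul, zero_add]
    congr 1
    refine Finset.sum_congr rfl fun y hy => ?_
    rw [if_neg (Finset.ne_of_mem_erase hy).symm, mul_comm]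
  have hA : Matrix.vecMul g A σ = ∑ y, g y * A y σ := rfl
  rw [Matrix.vecMul_sub, Matrix.vecMul_smul, Matrix.vecMul_one, Pi.sub_apply, hA, hsum,
    Pi.smul_apply, smul_eq_mul]
  ring

/-- **Walk-sum representation of the resolvent.** For a Metzler matrix `A` with
nonpositive diagonal, Perron root `lam`, and `α > max lam 0`, the matrix
`α·1 − A` is invertible and the entries of its inverse are computed by the sum
over all walks of the products of the transition weights
`w(α)_{σ→σ'} = A_{σ',σ}/(α − A_{σ,σ})`, times `1/(α − A_{σ',σ'})`. -/
theorem resolvent_walk_sum {V : Type*} [Fintype V] [DecidableEq V] [Nonempty V]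
    (A : Matrix V V ℝ) (lam : ℝ)
    (hMetzler : A.IsMetzler) (hdiag : ∀ σ, A σ σ ≤ 0)
    (hPerron : A.IsPerronRoot lam)
    (α : ℝ) (hαlam : lam < α) (hα : 0 < α) :
    IsUnit (α • (1 : Matrix V V ℝ) - A).det ∧
    ∀ σ σ' : V,
      (∑' l : {l : List V // IsWalk σ σ' l},
          pathWeight (fun x y => A y x / (α - A x x)) l.1) *
        ENNReal.ofReal (1 / (α - A σ' σ')) =
      ENNReal.ofReal ((α • (1 : Matrix V V ℝ) - A)⁻¹ σ' σ) := by
  have hD : ∀ σ, 0 < α - A σ σ := fun σ => by linarith [hdiag σ]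
  have hunit : IsUnit (α • (1 : Matrix V V ℝ) - A).det := (hPerron.det_ne_zero hαlam).isUnit
  refine ⟨hunit, fun σ σ' => ?_⟩
  rw [tsum_isWalk]
  set w : V → V → ℝ := fun x y => A y x / (α - A x x) with hw
  have hw0 : ∀ x y, x ≠ y → 0 ≤ w x y := fun x y hxy => div_nonneg (hMetzler x y hxy) (hD x).le
  have hstep : ∀ (g : V → ℝ) (x : V), (∑ y, (if x = y then 0 else w x y) * g y) * (α - A x x) =
      ∑ y, (if x = y then 0 else A y x) * g y := fun g x => by
    rw [Finset.sum_mul]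
    refine Finset.sum_congr rfl fun y _ => ?_
    split_ifs
    · simp
    · simp only [hw]
      field_simp [(hD x).ne']
  have hofReal : ∀ x y, (if x = y then (0 : ℝ≥0∞) else ENNReal.ofReal (w x y)) =
      ENNReal.ofReal (if x = y then 0 else w x y) := fun x y => by split_ifs <;> simp
  have hite : ∀ x y, 0 ≤ (if x = y then 0 else w x y) := fun x y => by
    split_ifs with h
    exacts [le_rfl, hw0 x y h]
  obtain ⟨u, hu, hueq⟩ : ∃ u : V → ℝ, (∀ i, 0 < u i) ∧
      (α • (1 : Matrix V V ℝ) - A.transpose).mulVec u = fun i => α - A i i := by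
    have hT : A.transpose.IsMetzler := fun x y hxy => hMetzler y x hxy.symm
    refine hT.exists_pos_mulVec_eq (fun β hβ => ?_) hD
    rw [← Matrix.det_transpose]
    simpa using hPerron.det_ne_zero (hαlam.trans_le hβ)
  have hu1 : ∀ x, 1 + ∑ y, (if x = y then 0 else w x y) * u y = u x := fun x => by
    have h1 := Matrix.vecMul_smul_one_sub A α u x
    have h2 := congrFun hueq x
    rw [← Matrix.vecMul_transpose] at h2
    simp only [Matrix.transpose_sub, Matrix.transpose_smul, Matrix.transpose_one,
      Matrix.transpose_transpose] at h2
    rw [h2, ← hstep] at h1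
    refine mul_right_cancel₀ (hD x).ne' ?_
    linarith
  have hfin : ∀ x, ∑' l, walkWeight w σ' x l ≠ ∞ := fun x => by
    refine ne_top_of_le_ne_top ENNReal.ofReal_ne_top
      (tsum_walkWeight_le w σ' (u := fun x => ENNReal.ofReal (u x)) (fun x => le_of_eq ?_) x)
    have hterm : ∀ y, 0 ≤ (if x = y then 0 else w x y) * u y := fun y =>
      mul_nonneg (hite x y) (hu y).le
    rw [← hu1 x, ENNReal.ofReal_add zero_le_one (Finset.sum_nonneg fun y _ => hterm y),
      ENNReal.ofReal_one, ENNReal.ofReal_sum_of_nonneg fun y _ => hterm y]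
    simp only [hofReal, ENNReal.ofReal_mul (hite x _)]
  set g : V → ℝ := fun x => (∑' l, walkWeight w σ' x l).toReal with hg
  have hg1 : ∀ x, g x = (if x = σ' then 1 else 0) +
      ∑ y, (if x = y then 0 else w x y) * g y := fun x => by
    simp only [hg]
    rw [tsum_walkWeight_eq, ENNReal.toReal_add (by split_ifs <;> simp)
      (ENNReal.sum_ne_top.2 fun y _ => ENNReal.mul_ne_top (by split_ifs <;> simp) (hfin y)),
      ENNReal.toReal_sum
        fun y _ => ENNReal.mul_ne_top (by split_ifs <;> simp) (hfin y)]
    congr 1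
    · split_ifs <;> simp
    · refine Finset.sum_congr rfl fun y _ => ?_
      rw [ENNReal.toReal_mul, hofReal, ENNReal.toReal_ofReal (hite x y)]
  have hvec : Matrix.vecMul g (α • (1 : Matrix V V ℝ) - A) = Pi.single σ' (α - A σ' σ') := by
    funext x
    rw [Matrix.vecMul_smul_one_sub, ← hstep, ← sub_mul, hg1 x, add_sub_cancel_right]
    by_cases hx : x = σ'
    · subst hx
      simp
    · simp [hx]
  have hgσ : g σ = (α - A σ' σ') * (α • (1 : Matrix V V ℝ) - A)⁻¹ σ' σ := by
    have h := congrArg (fun z => Matrix.vecMul z (α • (1 : Matrix V V ℝ) - A)⁻¹ σ) hvec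
    simpa [Matrix.vecMul_vecMul, Matrix.mul_nonsing_inv _ hunit, Matrix.single_vecMul] using h
  rw [← ENNReal.ofReal_toReal (hfin σ), ← ENNReal.ofReal_mul ENNReal.toReal_nonneg]
  congr 1
  change g σ * _ = _
  rw [hgσ]
  field_simp [(hD σ').ne']
end

section
/- Resolvent identity at the Lyapunov exponent: Let V be a finite nonempty index set and A an irreducible Metzler real matrix indexed by V with A_{σ,σ} ≤ 0 for all σ, admitting a Perron root λ* (λ* is an eigenvalue of A and every complex eigenvalue of A has real part at most λ*). If λ* > 0, then for every σ ∈ V the excursion weight at α = λ* equals exactly 1: f(λ*)_{σ→σ} = 1, where f(λ*)_{σ→σ} is the tsum over all excursions σ = σ₁, …, σ_ℓ = σ (ℓ ≥ 2, σ_i ≠ σ for 1 < i < ℓ) of ∏_{i=1}^{ℓ−1} A_{σ_{i+1},σ_i}/(λ* − A_{σ_i,σ_i}). -/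
open scoped ENNReal

/-- `l` is an excursion from `σ` to `σ`: a walk of length `≥ 2` starting and
ending at `σ` whose intermediate vertices are all different from `σ`. -/
def IsExcursion {V : Type*} (σ : V) (l : List V) : Prop :=
  2 ≤ l.length ∧ l.head? = some σ ∧ l.getLast? = some σ ∧ ∀ x ∈ l.tail.dropLast, x ≠ σ

/-- The total weight `f(α)_{σ→σ}` of all excursions from `σ` to `σ`, with
transition weights `w(α)_{x→y} = A_{y,x}/(α − A_{x,x})`. -/
noncomputable def excursionWeight {V : Type*} (A : Matrix V V ℝ) (α : ℝ) (σ : V) : ℝ≥0∞ :=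
  ∑' l : {l : List V // IsExcursion σ l},
    pathWeight (fun x y => A y x / (α - A x x)) l.1

/-- `A` is irreducible: any two distinct indices are connected by a chain of
strictly positive transition entries. -/
def Matrix.IsIrreducibleMetzlerChain {V : Type*} (A : Matrix V V ℝ) : Prop :=
  ∀ σ σ' : V, σ ≠ σ' → Relation.TransGen (fun x y => x ≠ y ∧ 0 < A y x) σ σ'

open Filter Topology

section PerronFrobenius

open Matrix

variable {V : Type*} [Fintype V] {B : Matrix V V ℝ}

theorem Matrix.mulVec_nonneg_of_nonneg (hB : ∀ i j, 0 ≤ B i j) {z : V → ℝ}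
    (hz : ∀ i, 0 ≤ z i) (i : V) : 0 ≤ (B *ᵥ z) i :=
  Finset.sum_nonneg fun j _ => mul_nonneg (hB i j) (hz j)

theorem Matrix.mulVec_pos_of_pos (hB : ∀ i j, 0 ≤ B i j) {z : V → ℝ}
    (hz : ∀ i, 0 ≤ z i) {i j : V} (hij : 0 < B i j) (hj : 0 < z j) : 0 < (B *ᵥ z) i :=
  Finset.sum_pos' (fun k _ => mul_nonneg (hB i k) (hz k)) ⟨j, Finset.mem_univ j, mul_pos hij hj⟩

theorem Matrix.pow_mulVec_nonneg_of_nonneg [DecidableEq V] (hB : ∀ i j, 0 ≤ B i j) {z : V → ℝ}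
    (hz : ∀ i, 0 ≤ z i) (n : ℕ) (i : V) : 0 ≤ (B ^ n *ᵥ z) i := by
  induction n generalizing i with
  | zero => simpa using hz i
  | succ n ih =>
    rw [pow_succ', ← mulVec_mulVec]
    exact mulVec_nonneg_of_nonneg hB ih i

theorem Matrix.pow_mulVec_pos_of_le [DecidableEq V] (hB : ∀ i j, 0 ≤ B i j)
    (hdiag : ∀ i, 0 < B i i) {z : V → ℝ} (hz : ∀ i, 0 ≤ z i) {m n : ℕ} (hmn : m ≤ n) {i : V}
    (hi : 0 < (B ^ m *ᵥ z) i) : 0 < (B ^ n *ᵥ z) i := by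
  induction n, hmn using Nat.le_induction with
  | base => exact hi
  | succ n _ ih =>
    rw [pow_succ', ← mulVec_mulVec]
    exact mulVec_pos_of_pos hB (pow_mulVec_nonneg_of_nonneg hB hz n) (hdiag i) ih

/-- An irreducible nonnegative matrix with positive diagonal is eventually positivity improving. -/
theorem Matrix.exists_pow_mulVec_pos [DecidableEq V] (hB : ∀ i j, 0 ≤ B i j)
    (hdiag : ∀ i, 0 < B i i)
    (hirr : ∀ i j, i ≠ j → Relation.TransGen (fun x y => 0 < B y x) i j)
    {z : V → ℝ} (hz : ∀ i, 0 ≤ z i) (hz0 : z ≠ 0) : ∃ N, ∀ i, 0 < (B ^ N *ᵥ z) i := by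
  obtain ⟨j, hj⟩ := Function.ne_iff.mp hz0
  have hj : 0 < z j := lt_of_le_of_ne (hz j) (Ne.symm hj)
  have step : ∀ {x y : V}, 0 < B y x → (∃ n, 0 < (B ^ n *ᵥ z) x) →
      ∃ n, 0 < (B ^ n *ᵥ z) y := by
    rintro x y hxy ⟨n, hn⟩
    refine ⟨n + 1, ?_⟩
    rw [pow_succ', ← mulVec_mulVec]
    exact mulVec_pos_of_pos hB (pow_mulVec_nonneg_of_nonneg hB hz n) hxy hn
  have hbase : ∃ n, 0 < (B ^ n *ᵥ z) j := ⟨0, by simpa using hj⟩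
  have hall : ∀ i, ∃ n, 0 < (B ^ n *ᵥ z) i := by
    intro i
    by_cases hij : j = i
    · exact hij ▸ hbase
    · induction hirr j i hij with
      | single h => exact step h hbase
      | @tail x y _ hxy ih =>
        by_cases hjx : j = x
        · exact step hxy (hjx ▸ hbase)
        · exact step hxy (ih hjx)
  choose n hn using hall
  exact ⟨Finset.univ.sup n, fun i =>
    pow_mulVec_pos_of_le hB hdiag hz (Finset.le_sup (Finset.mem_univ i)) (hn i)⟩

/-- The Collatz–Wielandt maximum of a nonnegative matrix is attained. -/
theorem Matrix.exists_collatzWielandt_max (hB : ∀ i j, 0 ≤ B i j) {ρ : ℝ} {y₀ : V → ℝ}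
    (hy₀ : ∀ i, 0 ≤ y₀ i) (hy₀0 : y₀ ≠ 0) (hρ : ∀ i, ρ * y₀ i ≤ (B *ᵥ y₀) i) :
    ∃ r, ∃ x : V → ℝ, (∀ i, 0 ≤ x i) ∧ x ≠ 0 ∧ (∀ i, r * x i ≤ (B *ᵥ x) i) ∧
      ∀ s, ∀ y : V → ℝ, (∀ i, 0 ≤ y i) → y ≠ 0 → (∀ i, s * y i ≤ (B *ᵥ y) i) → s ≤ r := by
  have normalize : ∀ s, ∀ y : V → ℝ, (∀ i, 0 ≤ y i) → y ≠ 0 → (∀ i, s * y i ≤ (B *ᵥ y) i) →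
      ∃ x ∈ stdSimplex ℝ V, ∀ i, s * x i ≤ (B *ᵥ x) i := by
    intro s y hy hy0 hs
    obtain ⟨j, hj⟩ := Function.ne_iff.mp hy0
    have hsum : 0 < ∑ i, y i := Finset.sum_pos' (fun i _ => hy i)
      ⟨j, Finset.mem_univ j, lt_of_le_of_ne (hy j) (Ne.symm hj)⟩
    refine ⟨(∑ i, y i)⁻¹ • y, ⟨fun i => ?_, ?_⟩, fun i => ?_⟩
    · exact mul_nonneg (inv_nonneg.mpr hsum.le) (hy i)
    · simp only [Pi.smul_apply, smul_eq_mul, ← Finset.mul_sum]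
      exact inv_mul_cancel₀ hsum.ne'
    · rw [mulVec_smul]
      simp only [Pi.smul_apply, smul_eq_mul]
      rw [mul_left_comm]
      exact mul_le_mul_of_nonneg_left (hs i) (inv_nonneg.mpr hsum.le)
  have bound : ∀ s, ∀ x ∈ stdSimplex ℝ V, (∀ i, s * x i ≤ (B *ᵥ x) i) →
      s ≤ ∑ i, ∑ j, B i j := by
    intro s x hx hs
    calc s = ∑ i, s * x i := by rw [← Finset.mul_sum, hx.2, mul_one]
      _ ≤ ∑ i, (B *ᵥ x) i := Finset.sum_le_sum fun i _ => hs i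
      _ ≤ ∑ i, ∑ j, B i j := Finset.sum_le_sum fun i _ => Finset.sum_le_sum fun j _ =>
          mul_le_of_le_one_right (hB i j)
            (hx.2 ▸ Finset.single_le_sum (fun k _ => hx.1 k) (Finset.mem_univ j))
  let K : Set (ℝ × (V → ℝ)) := (Set.Icc ρ (∑ i, ∑ j, B i j) ×ˢ stdSimplex ℝ V) ∩
    {q | ∀ i, q.1 * q.2 i ≤ (B *ᵥ q.2) i}
  have hK : IsCompact K := by
    refine (isCompact_Icc.prod (isCompact_stdSimplex ℝ V)).inter_right ?_
    simp only [Set.ofPred_forall]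
    refine isClosed_iInter fun i => isClosed_le (by fun_prop) ?_
    exact (continuous_apply i).comp (continuous_const.matrix_mulVec continuous_snd)
  obtain ⟨x₀, hx₀, hx₀'⟩ := normalize ρ y₀ hy₀ hy₀0 hρ
  have hρmem : (ρ, x₀) ∈ K := ⟨⟨⟨le_rfl, bound ρ x₀ hx₀ hx₀'⟩, hx₀⟩, hx₀'⟩
  obtain ⟨⟨r, x⟩, ⟨⟨hr, hx⟩, hrx⟩, hmax⟩ := hK.exists_isMaxOn ⟨_, hρmem⟩ continuous_fst.continuousOn
  refine ⟨r, x, hx.1, ?_, hrx, fun s y hy hy0 hs => ?_⟩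
  · intro h
    have hsum : ∑ i, x i = 1 := hx.2
    simp [h] at hsum
  · obtain ⟨x', hx', hsx'⟩ := normalize s y hy hy0 hs
    rcases le_total s ρ with h | h
    · exact h.trans hr.1
    · exact hmax (a := (s, x')) ⟨⟨⟨h, bound s x' hx' hsx'⟩, hx'⟩, hsx'⟩

/-- **Perron–Frobenius**, for an irreducible nonnegative matrix with positive diagonal: a
nonnegative eigenvalue that is maximal among the real eigenvalues has a positive eigenvector. -/
theorem Matrix.exists_pos_eigenvector_of_nonneg [DecidableEq V] (hB : ∀ i j, 0 ≤ B i j)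
    (hdiag : ∀ i, 0 < B i i)
    (hirr : ∀ i j, i ≠ j → Relation.TransGen (fun x y => 0 < B y x) i j) {ρ : ℝ} (hρ : 0 ≤ ρ)
    {v : V → ℝ} (hv0 : v ≠ 0) (hv : B *ᵥ v = ρ • v)
    (hmax : ∀ r, ∀ x : V → ℝ, x ≠ 0 → B *ᵥ x = r • x → r ≤ ρ) :
    ∃ x : V → ℝ, (∀ i, 0 < x i) ∧ B *ᵥ x = ρ • x := by
  have habs : ∀ i, ρ * |v i| ≤ (B *ᵥ fun j => |v j|) i := by
    intro i
    calc ρ * |v i| = |(B *ᵥ v) i| := by simp [hv, abs_mul, abs_of_nonneg hρ]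
      _ ≤ ∑ j, |B i j * v j| := Finset.abs_sum_le_sum_abs _ _
      _ = (B *ᵥ fun j => |v j|) i := Finset.sum_congr rfl fun j _ => by
          rw [abs_mul, abs_of_nonneg (hB i j)]
  have habs0 : (fun j => |v j|) ≠ 0 := fun h => hv0 (funext fun i => by simpa using congrFun h i)
  obtain ⟨r, x, hx, hx0, hrx, hr⟩ :=
    exists_collatzWielandt_max hB (fun i => abs_nonneg (v i)) habs0 habs
  have hρr : ρ ≤ r := hr ρ _ (fun i => abs_nonneg (v i)) habs0 habs
  have heig : B *ᵥ x = r • x := by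
    by_contra hne
    have hz : ∀ i, 0 ≤ (B *ᵥ x - r • x) i := fun i => by simpa using hrx i
    obtain ⟨N, hN⟩ := exists_pow_mulVec_pos hB hdiag hirr hz (sub_ne_zero.mpr hne)
    obtain ⟨M, hM⟩ := exists_pow_mulVec_pos hB hdiag hirr hx hx0
    have hNM := fun i => pow_mulVec_pos_of_le hB hdiag hz (le_max_left N M) (hN i)
    have hMN := fun i => pow_mulVec_pos_of_le hB hdiag hx (le_max_right N M) (hM i)
    set n := max N M
    set y := B ^ n *ᵥ x with hy
    have hdiff : B ^ n *ᵥ (B *ᵥ x - r • x) = B *ᵥ y - r • y := by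
      rw [mulVec_sub, mulVec_smul, hy, mulVec_mulVec, mulVec_mulVec, ← pow_succ, ← pow_succ']
    rw [hdiff] at hNM
    have hlt : ∀ i, ∀ᶠ s in 𝓝[>] r, s * y i ≤ (B *ᵥ y) i := by
      intro i
      have hi : r * y i < (B *ᵥ y) i := by simpa using hNM i
      have hcont : Tendsto (fun s => s * y i) (𝓝[>] r) (𝓝 (r * y i)) :=
        ((continuous_id.mul continuous_const).tendsto r).mono_left nhdsWithin_le_nhds
      exact (hcont.eventually_lt_const hi).mono fun s hs => hs.le
    obtain ⟨s, hs, hrs⟩ := ((eventually_all.mpr hlt).and self_mem_nhdsWithin).exists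
    have hy0 : y ≠ 0 := by
      obtain ⟨j, -⟩ := Function.ne_iff.mp hx0
      exact fun h => (hMN j).ne' (congrFun h j)
    exact absurd (hr s y (fun i => (hMN i).le) hy0 hs) (not_le.mpr hrs)
  obtain rfl : r = ρ := le_antisymm (hmax r x hx0 heig) hρr
  obtain ⟨N, hN⟩ := exists_pow_mulVec_pos hB hdiag hirr hx hx0
  refine ⟨B ^ N *ᵥ x, hN, ?_⟩
  rw [mulVec_mulVec, ← pow_succ', pow_succ, ← mulVec_mulVec, heig, mulVec_smul]

/-- The Perron root of an irreducible Metzler matrix has a positive eigenvector if it is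
nonnegative. -/
theorem Matrix.IsPerronRoot.exists_pos_eigenvector [DecidableEq V] {A : Matrix V V ℝ} {lam : ℝ}
    (hPerron : A.IsPerronRoot lam) (hMetzler : A.IsMetzler) (hirr : A.IsIrreducibleMetzlerChain)
    (hlam : 0 ≤ lam) : ∃ x : V → ℝ, (∀ i, 0 < x i) ∧ A *ᵥ x = lam • x := by
  obtain ⟨⟨v, hv0, hv⟩, hmax⟩ := hPerron
  obtain ⟨c, hc⟩ : ∃ c : ℝ, c = 1 + ∑ i, |A i i| := ⟨_, rfl⟩
  have hc0 : 0 < c := hc ▸ by positivity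
  have hshift : ∀ x : V → ℝ, (A + c • (1 : Matrix V V ℝ)) *ᵥ x = A *ᵥ x + c • x := fun x => by
    rw [add_mulVec, smul_mulVec, one_mulVec]
  have hdiag : ∀ i, 0 < (A + c • (1 : Matrix V V ℝ)) i i := by
    intro i
    have h := Finset.single_le_sum (fun j _ => abs_nonneg (A j j)) (Finset.mem_univ i)
    have h' := neg_abs_le (A i i)
    simp only [add_apply, smul_apply, one_apply_eq, smul_eq_mul, mul_one, hc]
    linarith
  have hoff : ∀ i j, i ≠ j → (A + c • (1 : Matrix V V ℝ)) i j = A i j := fun i j hij => by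
    simp [one_apply_ne hij]
  obtain ⟨x, hx, heig⟩ := exists_pos_eigenvector_of_nonneg (B := A + c • (1 : Matrix V V ℝ))
    (ρ := lam + c) (v := v)
    (fun i j => by
      by_cases hij : i = j
      · exact hij ▸ (hdiag i).le
      · rw [hoff i j hij]
        exact hMetzler j i (Ne.symm hij))
    hdiag
    (fun i j hij => Relation.TransGen.mono (fun a b hab => by
      rw [hoff b a (Ne.symm hab.1)]
      exact hab.2) _ _ (hirr i j hij))
    (by positivity) hv0 (by rw [hshift, hv, add_smul])
    (fun r x hx0 hx => by
      have hAx : A *ᵥ x = (r - c) • x := by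
        rw [sub_smul, ← hx, hshift, add_sub_cancel_right]
      have hre := hmax ((r - c : ℝ) : ℂ) ⟨fun i => (x i : ℂ),
        fun h => hx0 (funext fun i => by simpa using congrFun h i), funext fun i => by
          have hi := congrArg Complex.ofReal (congrFun hAx i)
          simpa [mulVec, dotProduct] using hi⟩
      rw [Complex.ofReal_re] at hre
      linarith)
  refine ⟨x, hx, ?_⟩
  rwa [hshift, add_smul, add_left_inj] at heig

end PerronFrobenius

section FirstPassage

variable {V : Type*} [Fintype V] [DecidableEq V]

/-- The total weight of the paths from a vertex to `σ` with exactly `n` intermediate vertices,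
none of which is `σ`. -/
noncomputable def firstPassageWeight (p : V → V → ℝ) (σ : V) : ℕ → V → ℝ
  | 0, x => p x σ
  | n + 1, x => ∑ y : {y // y ≠ σ}, p x y * firstPassageWeight p σ n y

variable {p : V → V → ℝ} {σ : V}

theorem firstPassageWeight_nonneg (hp : ∀ x y, 0 ≤ p x y) (n : ℕ) (x : V) :
    0 ≤ firstPassageWeight p σ n x := by
  induction n generalizing x with
  | zero => exact hp x σ
  | succ n ih => exact Finset.sum_nonneg fun y _ => mul_nonneg (hp x y) (ih y)

theorem sum_firstPassageWeight_add {u : V → ℝ} (hu : ∀ y, ∑ x, u x * p x y = u y) (n : ℕ) :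
    u σ * ∑ k ∈ Finset.range (n + 1), firstPassageWeight p σ k σ +
      ∑ x : {x // x ≠ σ}, u x * firstPassageWeight p σ n x = u σ := by
  induction n with
  | zero =>
    simp only [zero_add, Finset.sum_range_one, firstPassageWeight]
    rw [← Fintype.sum_eq_add_sum_subtype_ne (fun x => u x * p x σ) σ, hu]
  | succ n ih =>
    have hstep : ∑ x : {x // x ≠ σ}, u x * firstPassageWeight p σ n x =
        ∑ z, u z * firstPassageWeight p σ (n + 1) z := by
      simp only [firstPassageWeight, Finset.mul_sum]
      rw [Finset.sum_comm]
      refine Finset.sum_congr rfl fun x _ => ?_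
      rw [← hu x, Finset.sum_mul]
      exact Finset.sum_congr rfl fun z _ => mul_assoc _ _ _
    rw [hstep, Fintype.sum_eq_add_sum_subtype_ne _ σ, ← add_assoc, ← mul_add,
      ← Finset.sum_range_succ] at ih
    exact ih

/-- If an irreducible weight has a positive invariant vector, its first-return weights sum to
one. -/
theorem hasSum_firstPassageWeight (hp : ∀ x y, 0 ≤ p x y) {u : V → ℝ} (hu0 : ∀ x, 0 < u x)
    (hu : ∀ y, ∑ x, u x * p x y = u y)
    (hirr : ∀ x, σ ≠ x → Relation.TransGen (fun x y => 0 < p x y) σ x) :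
    HasSum (fun n => firstPassageWeight p σ n σ) 1 := by
  have hnonneg := firstPassageWeight_nonneg (σ := σ) hp
  have hsummable : Summable fun n => firstPassageWeight p σ n σ := by
    refine summable_of_sum_range_le (c := 1) (fun n => hnonneg n σ) fun n => ?_
    have hle : ∑ k ∈ Finset.range (n + 1), firstPassageWeight p σ k σ ≤ 1 := by
      have h := sum_firstPassageWeight_add (σ := σ) hu n
      have h' : 0 ≤ ∑ x : {x // x ≠ σ}, u x * firstPassageWeight p σ n x :=
        Finset.sum_nonneg fun x _ => mul_nonneg (hu0 x).le (hnonneg n x)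
      exact le_of_mul_le_mul_left (by linarith) (hu0 σ)
    exact (Finset.sum_le_sum_of_subset_of_nonneg (Finset.range_mono n.le_succ)
      fun k _ _ => hnonneg k σ).trans hle
  have hσ : Tendsto (fun n => firstPassageWeight p σ n σ) atTop (𝓝 0) :=
    hsummable.tendsto_atTop_zero
  have hstep : ∀ {x y : V}, 0 < p x y →
      Tendsto (fun n => firstPassageWeight p σ n x) atTop (𝓝 0) →
      Tendsto (fun n => firstPassageWeight p σ n y) atTop (𝓝 0) := by
    intro x y hxy hx
    by_cases hy : y = σ
    · rwa [hy]
    have hlim := ((tendsto_add_atTop_iff_nat 1).mpr hx).const_mul (p x y)⁻¹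
    rw [mul_zero] at hlim
    refine squeeze_zero (fun n => hnonneg n y) (fun n => ?_) hlim
    rw [le_inv_mul_iff₀ hxy]
    exact Finset.single_le_sum
      (f := fun z : {z // z ≠ σ} => p x z * firstPassageWeight p σ n z)
      (fun z _ => mul_nonneg (hp x z) (hnonneg n z)) (Finset.mem_univ ⟨y, hy⟩)
  have hzero : ∀ x, Tendsto (fun n => firstPassageWeight p σ n x) atTop (𝓝 0) := by
    intro x
    by_cases hx : σ = x
    · rwa [← hx]
    · have hpath := hirr x hx
      clear hx
      induction hpath with
      | single h => exact hstep h hσ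
      | tail _ h ih => exact hstep h ih
  have hrest : Tendsto (fun n => ∑ x : {x // x ≠ σ}, u x * firstPassageWeight p σ n x)
      atTop (𝓝 0) := by
    simpa using tendsto_finsetSum Finset.univ
      fun (x : {x // x ≠ σ}) _ => (hzero x).const_mul (u x)
  have hpartial : Tendsto (fun n => ∑ k ∈ Finset.range (n + 1), firstPassageWeight p σ k σ)
      atTop (𝓝 1) := by
    have hlim := (hrest.const_sub (u σ)).const_mul (u σ)⁻¹
    rw [sub_zero, inv_mul_cancel₀ (hu0 σ).ne'] at hlim
    refine hlim.congr fun n => ?_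
    rw [inv_mul_eq_iff_eq_mul₀ (hu0 σ).ne', sub_eq_iff_eq_add]
    exact (sum_firstPassageWeight_add hu n).symm
  exact (hasSum_iff_tendsto_nat_of_nonneg (fun n => hnonneg n σ) 1).mpr
    ((tendsto_add_atTop_iff_nat 1).mp hpartial)

end FirstPassage

section Excursions

variable {V : Type*}

/-- An excursion is determined by the list of its intermediate vertices. -/
noncomputable def excursionEquiv (σ : V) : List {x // x ≠ σ} ≃ {l : List V // IsExcursion σ l} :=
  Equiv.ofBijective
    (fun m => ⟨σ :: (m.map Subtype.val ++ [σ]), by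
      refine ⟨by simp, by simp, ?_, ?_⟩
      · rw [← List.cons_append, List.getLast?_concat]
      · simp only [List.tail_cons, List.dropLast_concat, List.mem_map]
        rintro x ⟨y, -, rfl⟩
        exact y.2⟩)
    (by
      constructor
      · intro m m' h
        have h' := congrArg Subtype.val h
        simp only [List.cons.injEq, true_and, List.append_cancel_right_eq] at h'
        exact List.map_injective_iff.mpr Subtype.val_injective h'
      · rintro ⟨l, hlen, hhead, hlast, hmid⟩
        obtain ⟨t, rfl⟩ := List.head?_eq_some_iff.mp hhead
        obtain ⟨s, a, rfl⟩ : ∃ s a, t = s ++ [a] :=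
          (List.eq_nil_or_concat' t).resolve_left (by rintro rfl; simp at hlen)
        obtain rfl : a = σ := by
          rw [← List.cons_append, List.getLast?_concat] at hlast
          exact Option.some.inj hlast
        simp only [List.tail_cons, List.dropLast_concat] at hmid
        obtain ⟨m, rfl⟩ : ∃ m : List {x // x ≠ a}, m.map Subtype.val = s :=
          CanLift.prf s hmid
        exact ⟨m, rfl⟩)

variable [Fintype V] [DecidableEq V]

theorem sum_pathWeight_eq_firstPassageWeight {w p : V → V → ℝ} (hp : ∀ x y, 0 ≤ p x y)
    (hwp : ∀ x y, ENNReal.ofReal (w x y) = ENNReal.ofReal (p x y)) (σ : V) (n : ℕ) (x : V) :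
    ∑ t : Fin n → {y // y ≠ σ}, pathWeight w (x :: ((List.ofFn t).map Subtype.val ++ [σ])) =
      ENNReal.ofReal (firstPassageWeight p σ n x) := by
  induction n generalizing x with
  | zero => simp [pathWeight, firstPassageWeight, hwp]
  | succ n ih =>
    rw [← (Fin.consEquiv fun _ : Fin (n + 1) => {y // y ≠ σ}).sum_comp, Fintype.sum_prod_type,
      firstPassageWeight, ENNReal.ofReal_sum_of_nonneg fun (y : {y // y ≠ σ}) _ =>
        mul_nonneg (hp x y) (firstPassageWeight_nonneg (σ := σ) hp n y)]
    refine Finset.sum_congr rfl fun y _ => ?_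
    rw [ENNReal.ofReal_mul (hp x y), ← ih y, Finset.mul_sum]
    refine Finset.sum_congr rfl fun t _ => ?_
    simp [Fin.consEquiv, pathWeight, hwp]

theorem tsum_pathWeight_excursions {w p : V → V → ℝ} (hp : ∀ x y, 0 ≤ p x y)
    (hwp : ∀ x y, ENNReal.ofReal (w x y) = ENNReal.ofReal (p x y)) (σ : V) :
    ∑' l : {l : List V // IsExcursion σ l}, pathWeight w l.1 =
      ∑' n, ENNReal.ofReal (firstPassageWeight p σ n σ) := by
  rw [← (excursionEquiv σ).tsum_eq, ← List.equivSigmaTuple.symm.tsum_eq, ENNReal.tsum_sigma']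
  refine tsum_congr fun n => ?_
  rw [← sum_pathWeight_eq_firstPassageWeight hp hwp σ n σ, tsum_fintype]
  rfl

end Excursions

/-- **Resolvent identity at the Lyapunov exponent.** For an irreducible Metzler
matrix `A` with nonpositive diagonal and strictly positive Perron root `lam`,
the excursion weight at `α = lam` equals exactly `1` at every vertex. -/
theorem resolvent_identity_at_lyapunov {V : Type*} [Fintype V] [DecidableEq V] [Nonempty V]
    (A : Matrix V V ℝ) (lam : ℝ)
    (hMetzler : A.IsMetzler) (hdiag : ∀ σ, A σ σ ≤ 0)
    (hirr : A.IsIrreducibleMetzlerChain) (hPerron : A.IsPerronRoot lam)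
    (hlam : 0 < lam) :
    ∀ σ : V, excursionWeight A lam σ = 1 := by
  intro σ
  obtain ⟨v, hv0, hv⟩ := hPerron.exists_pos_eigenvector hMetzler hirr hlam.le
  have hden : ∀ x, 0 < lam - A x x := fun x => by linarith [hdiag x]
  let p : V → V → ℝ := fun x y => if x = y then 0 else A y x / (lam - A x x)
  have hp : ∀ x y, 0 ≤ p x y := by
    intro x y
    by_cases hxy : x = y
    · simp [p, hxy]
    · simpa [p, hxy] using div_nonneg (hMetzler x y hxy) (hden x).le
  have hwp : ∀ x y, ENNReal.ofReal (A y x / (lam - A x x)) = ENNReal.ofReal (p x y) := by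
    intro x y
    by_cases hxy : x = y
    · subst hxy
      simpa [p] using div_nonpos_of_nonpos_of_nonneg (hdiag x) (hden x).le
    · simp [p, hxy]
  have hinv : ∀ y, ∑ x, ((lam - A x x) * v x) * p x y = (lam - A y y) * v y := by
    intro y
    have hy : ∑ x, A y x * v x = lam * v y := congrFun hv y
    rw [Fintype.sum_eq_add_sum_subtype_ne _ y] at hy ⊢
    have hsum : ∑ x : {x // x ≠ y}, ((lam - A x x) * v x) * p x y =
        ∑ x : {x // x ≠ y}, A y x * v x := by
      refine Finset.sum_congr rfl fun x _ => ?_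
      have := (hden x).ne'
      simp only [p, if_neg x.2]
      field_simp
    rw [hsum]
    simp only [p, if_true, mul_zero, zero_add]
    linarith
  have hsum := hasSum_firstPassageWeight (σ := σ) hp (fun x => mul_pos (hden x) (hv0 x)) hinv
    fun x hx => Relation.TransGen.mono (fun a b hab => by
      simpa [p, hab.1] using div_pos hab.2 (hden a)) _ _ (hirr σ x hx)
  rw [excursionWeight, tsum_pathWeight_excursions hp hwp,
    ← ENNReal.ofReal_tsum_of_nonneg (fun n => firstPassageWeight_nonneg hp n σ) hsum.summable,
    hsum.tsum_eq, ENNReal.ofReal_one]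
end

section
/- Loop erasure increases weight for closed walks: Let V be a type, σ* ∈ V, and w : V → V → ℝ with 0 ≤ w(u,v) ≤ 1 for all u, v. Let γ = (σ₁, …, σ_ℓ) be a finite sequence with ℓ ≥ 2, σ₁ = σ_ℓ = σ*. Then there exists a finite sequence γ' = (τ₁, …, τ_m) with m ≥ 2, τ₁ = τ_m = σ*, whose intermediate vertices τ₂, …, τ_{m−1} are pairwise distinct and all different from σ*, such that every consecutive pair (τ_j, τ_{j+1}) of γ' occurs as a consecutive pair (σ_i, σ_{i+1}) of γ, and ∏_{j=1}^{m−1} w(τ_j, τ_{j+1}) ≥ ∏_{i=1}^{ℓ−1} w(σ_i, σ_{i+1}). -/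
/-- The weight of a finite walk: the real product of the edge weights along its
consecutive pairs; the empty product is `1`. -/
def walkWeightR {V : Type*} (w : V → V → ℝ) : List V → ℝ
  | [] => 1
  | [_] => 1
  | a :: b :: l => w a b * walkWeightR w (b :: l)

theorem walkWeightR_nonneg {V : Type*} {w : V → V → ℝ} (hw : ∀ u v : V, 0 ≤ w u v) :
    ∀ l : List V, 0 ≤ walkWeightR w l
  | [] => zero_le_one
  | [_] => zero_le_one
  | a :: b :: l => mul_nonneg (hw a b) (walkWeightR_nonneg hw (b :: l))

theorem walkWeightR_cons_le {V : Type*} {w : V → V → ℝ}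
    (hw : ∀ u v : V, 0 ≤ w u v ∧ w u v ≤ 1) (a : V) :
    ∀ l : List V, walkWeightR w (a :: l) ≤ walkWeightR w l
  | [] => le_rfl
  | b :: _ => mul_le_of_le_one_left (walkWeightR_nonneg (fun u v => (hw u v).1) _) (hw a b).2

theorem walkWeightR_append_le {V : Type*} {w : V → V → ℝ}
    (hw : ∀ u v : V, 0 ≤ w u v ∧ w u v ≤ 1) (s t : List V) :
    walkWeightR w (s ++ t) ≤ walkWeightR w t := by
  induction s with
  | nil => exact le_rfl
  | cons a s ih => exact (walkWeightR_cons_le hw a (s ++ t)).trans ih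

theorem mem_zip_tail_append {V : Type*} {p : V × V} (s : List V) {t : List V}
    (hp : p ∈ t.zip t.tail) : p ∈ (s ++ t).zip (s ++ t).tail := by
  induction s with
  | nil => exact hp
  | cons a s ih =>
    rw [List.cons_append, List.tail_cons]
    generalize s ++ t = l at ih ⊢
    cases l with
    | nil => simp at ih
    | cons b l => exact List.mem_cons_of_mem _ ih

/-- Loop erasure for walks with arbitrary endpoints. -/
theorem exists_nodup_walk {V : Type*} {w : V → V → ℝ}
    (hw : ∀ u v : V, 0 ≤ w u v ∧ w u v ≤ 1) (l : List V) (a : V) :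
    ∃ l' : List V, (a :: l').Nodup ∧ (a :: l').getLast? = (a :: l).getLast? ∧
      (∀ p ∈ (a :: l').zip l', p ∈ (a :: l).zip l) ∧
      walkWeightR w (a :: l) ≤ walkWeightR w (a :: l') := by
  induction l generalizing a with
  | nil => exact ⟨[], by simp⟩
  | cons b l ih =>
    obtain ⟨l', hnodup, hlast, hpairs, hweight⟩ := ih b
    by_cases ha : a ∈ b :: l'
    · obtain ⟨s, t, hst⟩ := List.append_of_mem ha
      refine ⟨t, ?_, ?_, fun p hp => ?_, ?_⟩
      · rw [hst] at hnodup
        exact hnodup.of_append_right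
      · rw [List.getLast?_cons_cons, ← hlast, hst, List.getLast?_append_cons]
      · have hp' := mem_zip_tail_append s (t := a :: t) hp
        rw [← hst] at hp'
        exact List.mem_cons_of_mem _ (hpairs p hp')
      · calc walkWeightR w (a :: b :: l) ≤ walkWeightR w (b :: l) := walkWeightR_cons_le hw a _
          _ ≤ walkWeightR w (b :: l') := hweight
          _ ≤ walkWeightR w (a :: t) := hst ▸ walkWeightR_append_le hw s (a :: t)
    · refine ⟨b :: l', List.nodup_cons.2 ⟨ha, hnodup⟩, ?_, fun p hp => ?_,
        mul_le_mul_of_nonneg_left hweight (hw a b).1⟩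
      · rw [List.getLast?_cons_cons, hlast, List.getLast?_cons_cons]
      · rcases List.mem_cons.1 hp with rfl | hp
        · exact List.mem_cons_self
        · exact List.mem_cons_of_mem _ (hpairs p hp)

/-- **Loop erasure increases weight for closed walks.** Given edge weights in
`[0,1]` and a closed walk `γ` at `σ*`, there is a simple excursion `γ'` from
`σ*` to `σ*` (pairwise distinct intermediate vertices, all different from `σ*`)
using only consecutive pairs of `γ`, whose weight is at least that of `γ`. -/
theorem loop_erasure_closed_walk {V : Type*} (σs : V) (w : V → V → ℝ)
    (hw : ∀ u v : V, 0 ≤ w u v ∧ w u v ≤ 1)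
    (γ : List V) (hlen : 2 ≤ γ.length)
    (hhead : γ.head? = some σs) (hlast : γ.getLast? = some σs) :
    ∃ γ' : List V, 2 ≤ γ'.length ∧ γ'.head? = some σs ∧ γ'.getLast? = some σs ∧
      γ'.tail.dropLast.Nodup ∧ (∀ x ∈ γ'.tail.dropLast, x ≠ σs) ∧
      (∀ p ∈ γ'.zip γ'.tail, p ∈ γ.zip γ.tail) ∧
      walkWeightR w γ ≤ walkWeightR w γ' := by
  match γ, hlen with
  | a :: b :: l, _ =>
    obtain rfl : a = σs := by simpa using hhead
    obtain ⟨l', hnodup, hlast', hpairs, hweight⟩ := exists_nodup_walk hw l b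
    rw [List.getLast?_cons_cons, ← hlast'] at hlast
    refine ⟨a :: b :: l', by simp, rfl, by rw [List.getLast?_cons_cons, hlast],
      hnodup.sublist (List.dropLast_sublist _), ?_, fun p hp => ?_,
      mul_le_mul_of_nonneg_left hweight (hw a b).1⟩
    · rintro x hx rfl
      have hsplit := List.dropLast_append_getLast? x hlast
      rw [← hsplit] at hnodup
      exact List.disjoint_of_nodup_append hnodup hx List.mem_cons_self
    · rcases List.mem_cons.1 hp with rfl | hp
      · exact List.mem_cons_self
      · exact List.mem_cons_of_mem _ (hpairs p hp)
end
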